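/- Every cubic graph that admits a perfect matching admits a 5-weak bisection. -/

import Mathlib

open SimpleGraph

/-- A cubic graph: every vertex has degree 3. -/
def IsCubic {V : Type*} [Fintype V] (G : SimpleGraph V) : Prop :=
  ∀ v : V, Nat.card (G.neighborSet v) = 3

/-- A circular nowhere-zero `r`-flow: an orientation `dir` of `G` together with
a flow value `f` on each directed edge, with values in `[1, r-1]` and flow
conservation at every vertex. -/
structure CNZF {V : Type*} [Fintype V] (G : SimpleGraph V) (r : ℝ) where
  dir : V → V → Bool
  f : V → V → ℝ
  orients : ∀ u v, G.Adj u v ↔ (dir u v = true ∨ dir v u = true)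
  asymm : ∀ u v, dir u v = true → dir v u = false
  lb : ∀ u v, dir u v = true → 1 ≤ f u v
  ub : ∀ u v, dir u v = true → f u v ≤ r - 1
  conserv : ∀ v : V, (∑ u : V, if dir v u = true then f v u else 0)
      = ∑ u : V, if dir u v = true then f u v else 0

/-- Out-degree of a vertex in an orientation. -/
noncomputable def outDeg {V : Type*} (dir : V → V → Bool) (v : V) : ℕ :=
  Nat.card {u | dir v u = true}

/-- Every connected component of the subgraph induced by `S` is a tree
on at most `m` vertices. -/
def MonoOK {V : Type*} (G : SimpleGraph V) (m : ℕ) (S : Set V) : Prop :=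
  (G.induce S).IsAcyclic ∧
    ∀ c : (G.induce S).ConnectedComponent, Nat.card c.supp ≤ m

/-- A `k`-weak bisection, given by its first part `S`. -/
def IsWeakBisection {V : Type*} [Fintype V] (G : SimpleGraph V) (k : ℕ) (S : Set V) : Prop :=
  Nat.card S = Nat.card (Sᶜ : Set V) ∧ MonoOK G (k-2) S ∧ MonoOK G (k-2) (Sᶜ : Set V)

/-- Every monochromatic component of the 2-coloring `c` has at most `m` vertices. -/
def MonoAtMost {V : Type*} (G : SimpleGraph V) (c : V → Bool) (m : ℕ) : Prop :=
  ∀ b : Bool, ∀ comp : (G.induce {v | c v = b}).ConnectedComponent,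
    Nat.card comp.supp ≤ m

/-- Edges of `L_k` (on vertex labels `0, …, 5+2k`): `L_0` is `K_{3,3}` minus an
edge (parts `{0,1,4}` and `{2,3,5}`, edge `45` removed, degree-2 vertices `4,5`);
at step `j` the two new adjacent vertices `4+2j, 5+2j` are attached to the
previous degree-2 vertices `2+2j, 3+2j`. The degree-2 vertices of `L_k` are
`4+2k` and `5+2k`. -/
def LEdge (k : ℕ) (a b : ℕ) : Prop :=
  (a, b) ∈ ({(0,2),(0,3),(0,5),(1,2),(1,3),(1,5),(4,2),(4,3)} : Set (ℕ × ℕ)) ∨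
  ∃ j, 1 ≤ j ∧ j ≤ k ∧
    ((a, b) = (4+2*j, 5+2*j) ∨ (a, b) = (2+2*j, 4+2*j) ∨ (a, b) = (3+2*j, 5+2*j))

/-- The graph `L_k`. -/
def Lgraph (k : ℕ) : SimpleGraph (Fin (6+2*k)) :=
  SimpleGraph.fromRel (fun a b => LEdge k a.val b.val)

/-- Edges of `T_k`: one copy of `L'_k` (the copy of `L_k` on `0..5+2k` with apex
`6+2k`), two copies of `L'_0` (on `7+2k..12+2k` with apex `13+2k`, and on
`14+2k..19+2k` with apex `20+2k`), and a central vertex `21+2k` adjacent to the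
three apexes. -/
def TEdge (k : ℕ) (a b : ℕ) : Prop :=
  LEdge k a b
  ∨ (a = 6+2*k ∧ (b = 4+2*k ∨ b = 5+2*k))
  ∨ (∃ a' b', LEdge 0 a' b' ∧ a = 7+2*k+a' ∧ b = 7+2*k+b')
  ∨ (a = 13+2*k ∧ (b = 11+2*k ∨ b = 12+2*k))
  ∨ (∃ a' b', LEdge 0 a' b' ∧ a = 14+2*k+a' ∧ b = 14+2*k+b')
  ∨ (a = 20+2*k ∧ (b = 18+2*k ∨ b = 19+2*k))
  ∨ (a = 21+2*k ∧ (b = 6+2*k ∨ b = 13+2*k ∨ b = 20+2*k))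

/-- The cubic graph `T_k`. -/
def Tgraph (k : ℕ) : SimpleGraph (Fin (22+2*k)) :=
  SimpleGraph.fromRel (fun a b => TEdge k a.val b.val)

/-- A valid factor of `G`: a spanning subgraph all of whose components are paths
or cycles (equivalently, all degrees are 1 or 2), such that the two endpoints
(degree-1 vertices) of every odd component are non-adjacent in `G`; in particular
no component is an isolated vertex. -/
def IsValidFactor {V : Type*} (G H : SimpleGraph V) : Prop :=
  H ≤ G ∧
  (∀ v : V, 1 ≤ Nat.card (H.neighborSet v) ∧ Nat.card (H.neighborSet v) ≤ 2) ∧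
  ∀ c : H.ConnectedComponent, Odd (Nat.card c.supp) →
    ∀ u v : V, u ∈ c.supp → v ∈ c.supp → u ≠ v →
      Nat.card (H.neighborSet u) = 1 → Nat.card (H.neighborSet v) = 1 → ¬ G.Adj u v

/-- A component of `H` is a cycle iff all its vertices have degree 2 in `H`. -/
def IsCycleComp {V : Type*} (H : SimpleGraph V) (c : H.ConnectedComponent) : Prop :=
  ∀ v ∈ c.supp, Nat.card (H.neighborSet v) = 2

/-- An odd cycle component. -/
def OddCycleComp {V : Type*} (H : SimpleGraph V) (c : H.ConnectedComponent) : Prop :=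
  Odd (Nat.card c.supp) ∧ IsCycleComp H c

/-- An odd path component (a component with an odd number of vertices containing
a degree-1 vertex). -/
def OddPathComp {V : Type*} (H : SimpleGraph V) (c : H.ConnectedComponent) : Prop :=
  Odd (Nat.card c.supp) ∧ ∃ v ∈ c.supp, Nat.card (H.neighborSet v) = 1

noncomputable def numComponents {V : Type*} (H : SimpleGraph V) : ℕ := Nat.card H.ConnectedComponent

noncomputable def numOddCycles {V : Type*} (H : SimpleGraph V) : ℕ :=
  Nat.card {c : H.ConnectedComponent // OddCycleComp H c}

/-- `H` is a valid factor of `G` with the minimum number of components. -/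
def MinimizesComponents {V : Type*} (G H : SimpleGraph V) : Prop :=
  IsValidFactor G H ∧ ∀ H' : SimpleGraph V, IsValidFactor G H' →
    numComponents H ≤ numComponents H'

/-- `H` is a valid factor of `G` minimizing the number of components and,
subject to that, the number of odd cycles. -/
def IsMinValidFactor {V : Type*} (G H : SimpleGraph V) : Prop :=
  MinimizesComponents G H ∧
  ∀ H' : SimpleGraph V, IsValidFactor G H' →
    numComponents H' = numComponents H → numOddCycles H ≤ numOddCycles H'

/-- An external vertex of a factor: an endpoint of a path component, or a vertex
of an odd cycle component. -/
def ExternalVtx {V : Type*} (H : SimpleGraph V) (v : V) : Prop :=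
  Nat.card (H.neighborSet v) = 1 ∨ OddCycleComp H (H.connectedComponentMk v)

/-!
Let `M` be a perfect matching and `N` a maximal matching of `G \ M`. The alternating components of
`M ∪ N` are paths and even cycles, so some `S` has all edges of `M ∪ N` going across to `Sᶜ`, and
the matching `M` then pairs `S` with `Sᶜ`. A monochromatic edge is thus in `R := G \ M \ N`, a graph
of maximum degree two. By maximality every edge of `R` has an end covered by `N`, and such an end
has degree at most one in `R`; so every component of `R` is a star with at most two leaves.
-/

open Function Set

section Involution

variable {X : Type*}

lemma exists_set_apply_mem_iff_notMem {f : X → X} (hf : Involutive f) (hfix : ∀ x, f x ≠ x) :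
    ∃ s : Set X, ∀ x, f x ∈ s ↔ x ∉ s := by
  obtain ⟨_, -⟩ := exists_wellFoundedLT X
  refine ⟨{x | x < f x}, fun x ↦ ?_⟩
  rw [mem_ofPred_eq, mem_ofPred_eq, hf x, not_lt, (hfix x).le_iff_lt]

variable {f g : Equiv.Perm X}

lemma apply_zpow_mul_apply (hf : Involutive f) (hg : Involutive g) (k : ℤ) (x : X) :
    f (((f * g) ^ k) x) = ((f * g) ^ (-k)) (f x) := by
  have hconj : f * (f * g) * f⁻¹ = (f * g)⁻¹ := by
    have hff : f * f = 1 := Equiv.ext hf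
    have hgg : g * g = 1 := Equiv.ext hg
    rw [mul_inv_rev, ← mul_assoc, hff, one_mul, ← eq_inv_of_mul_eq_one_left hgg]
  have hpow : f * (f * g) ^ k * f⁻¹ = (f * g) ^ (-k) := by
    rw [← conj_zpow, hconj, inv_zpow']
  rw [← hpow]
  simp

lemma sameCycle_mul_apply_apply (hf : Involutive f) (hg : Involutive g) {x y : X}
    (h : (f * g).SameCycle x y) : (f * g).SameCycle (f x) (f y) := by
  obtain ⟨k, rfl⟩ := h
  exact ⟨-k, (apply_zpow_mul_apply hf hg k x).symm⟩

lemma not_sameCycle_mul_apply (hf : Involutive f) (hg : Involutive g) (hffix : ∀ x, f x ≠ x)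
    (hgfix : ∀ x, g x ≠ x) (x : X) : ¬ (f * g).SameCycle x (f x) := by
  rintro ⟨k, hk⟩
  have hreflect (j : ℤ) : f (((f * g) ^ j) x) = ((f * g) ^ (-j + k)) x := by
    rw [apply_zpow_mul_apply hf hg, ← hk, zpow_add, Equiv.Perm.mul_apply]
  obtain ⟨j, rfl | rfl⟩ := Int.even_or_odd' k
  · apply hffix (((f * g) ^ j) x)
    rw [hreflect, show -j + 2 * j = j by ring]
  · apply hgfix (((f * g) ^ j) x)
    apply f.injective
    rw [hreflect, show -j + (2 * j + 1) = 1 + j by ring, zpow_one_add]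
    rfl

-- Both involutions exchange the same pairs of orbits of the rotation `f * g`.
lemma exists_set_apply_mem_iff_notMem₂ {f g : X → X} (hf : Involutive f) (hg : Involutive g)
    (hffix : ∀ x, f x ≠ x) (hgfix : ∀ x, g x ≠ x) :
    ∃ s : Set X, ∀ x, (f x ∈ s ↔ x ∉ s) ∧ (g x ∈ s ↔ x ∉ s) := by
  let p : Equiv.Perm X := hf.toPerm * hg.toPerm
  let orbit : X → Quotient (Equiv.Perm.SameCycle.setoid p) := Quotient.mk _
  let f' : Quotient (Equiv.Perm.SameCycle.setoid p) → Quotient (Equiv.Perm.SameCycle.setoid p) :=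
    Quotient.map f fun _ _ ↦ sameCycle_mul_apply_apply (f := hf.toPerm) (g := hg.toPerm) hf hg
  have hf' : Involutive f' := by
    rintro ⟨x⟩
    exact congrArg orbit (hf x)
  have hf'fix : ∀ q, f' q ≠ q := by
    rintro ⟨x⟩ h
    exact not_sameCycle_mul_apply (f := hf.toPerm) (g := hg.toPerm) hf hg hffix hgfix x
      (Quotient.exact h.symm)
  have horbit (x : X) : orbit (g x) = f' (orbit x) :=
    Quotient.sound ⟨1, by rw [zpow_one]; exact congrArg f (hg x)⟩
  obtain ⟨t, ht⟩ := exists_set_apply_mem_iff_notMem hf' hf'fix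
  refine ⟨orbit ⁻¹' t, fun x ↦ ⟨ht (orbit x), ?_⟩⟩
  rw [mem_preimage, horbit]
  exact ht (orbit x)

open Classical in
/-- The lift of a self-map `f` of `X` to the double cover `X × Bool` that exchanges the two sheets
over the fixed points of `f`. It turns an involution into one without fixed points. -/
noncomputable def sheetSwap (f : X → X) (p : X × Bool) : X × Bool :=
  if f p.1 = p.1 then (p.1, !p.2) else (f p.1, p.2)

lemma sheetSwap_involutive {f : X → X} (hf : Involutive f) : Involutive (sheetSwap f) := by
  rintro ⟨x, b⟩
  by_cases h : f x = x
  · simp [sheetSwap, h]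
  · simp [sheetSwap, h, hf x, Ne.symm h]

lemma sheetSwap_ne (f : X → X) (p : X × Bool) : sheetSwap f p ≠ p := by
  obtain ⟨x, b⟩ := p
  by_cases h : f x = x <;> simp [sheetSwap, h]

lemma exists_set_apply_mem_iff_notMem_of_ne {f g : X → X} (hf : Involutive f)
    (hg : Involutive g) :
    ∃ s : Set X, ∀ x, (f x ≠ x → (f x ∈ s ↔ x ∉ s)) ∧ (g x ≠ x → (g x ∈ s ↔ x ∉ s)) := by
  obtain ⟨t, ht⟩ := exists_set_apply_mem_iff_notMem₂ (sheetSwap_involutive hf)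
    (sheetSwap_involutive hg) (sheetSwap_ne f) (sheetSwap_ne g)
  refine ⟨{x | (x, false) ∈ t}, fun x ↦ ⟨fun hx ↦ ?_, fun hx ↦ ?_⟩⟩
  · simpa [sheetSwap, hx] using (ht (x, false)).1
  · simpa [sheetSwap, hx] using (ht (x, false)).2

end Involution

section Matching

variable {V : Type*} {G H : SimpleGraph V}

lemma exists_involutive_of_isMatching {M : G.Subgraph} (hM : M.IsMatching) :
    ∃ f : V → V, Involutive f ∧ ∀ u v, M.Adj u v → f u = v := by
  have hpartner (u : V) : ∃ v, M.Adj u v ∨ u ∉ M.verts ∧ v = u := by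
    by_cases hu : u ∈ M.verts
    · exact (hM hu).exists.imp fun _ ↦ Or.inl
    · exact ⟨u, .inr ⟨hu, rfl⟩⟩
  choose f hf using hpartner
  have hadj (u v : V) (huv : M.Adj u v) : f u = v := by
    rcases hf u with h | ⟨hu, -⟩
    · exact hM.eq_of_adj_left h huv
    · exact absurd huv.fst_mem hu
  refine ⟨f, fun u ↦ ?_, hadj⟩
  rcases hf u with h | ⟨-, h⟩
  · exact hadj _ _ h.symm
  · rw [h, h]

lemma exists_isBipartiteWith_compl_of_isMatching {M : G.Subgraph} {N : H.Subgraph}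
    (hM : M.IsMatching) (hN : N.IsMatching) :
    ∃ S : Set V, (M.spanningCoe ⊔ N.spanningCoe).IsBipartiteWith S Sᶜ := by
  obtain ⟨f, hf, hMf⟩ := exists_involutive_of_isMatching hM
  obtain ⟨g, hg, hNg⟩ := exists_involutive_of_isMatching hN
  obtain ⟨S, hS⟩ := exists_set_apply_mem_iff_notMem_of_ne hf hg
  refine ⟨S, disjoint_compl_right, fun u v huv ↦ ?_⟩
  have hmem : v ∈ S ↔ u ∉ S := by
    rcases huv with h | h
    · obtain rfl := hMf u v h
      exact (hS u).1 h.ne'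
    · obtain rfl := hNg u v h
      exact (hS u).2 h.ne'
  rw [mem_compl_iff, mem_compl_iff]
  tauto

lemma nonempty_equiv_of_isPerfectMatching {M : G.Subgraph} (hM : M.IsPerfectMatching) {S T : Set V}
    (hST : M.spanningCoe.IsBipartiteWith S T) : Nonempty (S ≃ T) := by
  obtain ⟨f, hf, hMf⟩ := exists_involutive_of_isMatching hM.1
  have hadj (v : V) : M.Adj v (f v) := by
    obtain ⟨w, hw⟩ := (hM.1 (hM.2 v)).exists
    rwa [hMf v w hw]
  refine ⟨hf.toPerm.subtypeEquiv fun v ↦ ⟨fun hv ↦ ?_, fun hv ↦ ?_⟩⟩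
  · exact hST.mem_of_mem_adj hv (hadj v)
  · exact hST.mem_of_mem_adj' hv (hadj v)

lemma isMatching_sSup_of_isChain {c : Set G.Subgraph} (hc : IsChain (· ≤ ·) c)
    (hM : ∀ M ∈ c, M.IsMatching) : (sSup c).IsMatching := by
  intro v hv
  rw [Subgraph.verts_sSup, mem_iUnion₂] at hv
  obtain ⟨M, hMc, hvM⟩ := hv
  obtain ⟨w, hvw⟩ := (hM M hMc hvM).exists
  refine ⟨w, ⟨M, hMc, hvw⟩, fun w' ⟨M', hMc', hvw'⟩ ↦ ?_⟩
  rcases hc.total hMc hMc' with hle | hle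
  · exact (hM M' hMc').eq_of_adj_left hvw' (hle.2 hvw)
  · exact (hM M hMc).eq_of_adj_left (hle.2 hvw') hvw

lemma exists_maximal_isMatching (G : SimpleGraph V) :
    ∃ N : G.Subgraph, Maximal Subgraph.IsMatching N :=
  zorn_le₀ {N : G.Subgraph | N.IsMatching} fun c hcM hc ↦
    ⟨sSup c, isMatching_sSup_of_isChain hc hcM, fun _ ↦ le_sSup⟩

lemma mem_verts_or_mem_verts_of_maximal_isMatching {N : G.Subgraph}
    (hN : Maximal Subgraph.IsMatching N) {u v : V} (huv : G.Adj u v) :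
    u ∈ N.verts ∨ v ∈ N.verts := by
  by_contra! huvN
  have hdisj : Disjoint N.support (G.subgraphOfAdj huv).support := by
    rw [hN.prop.support_eq_verts, support_subgraphOfAdj, disjoint_insert_right,
      disjoint_singleton_right]
    exact huvN
  have hle : N ⊔ G.subgraphOfAdj huv ≤ N :=
    hN.le_of_ge (hN.prop.sup (.subgraphOfAdj huv) hdisj) le_sup_left
  exact huvN.1 (hle.1 (.inr (.inl rfl)))

lemma encard_neighborSet_sdiff_add_one_le {M : G.Subgraph} {v : V} (hv : v ∈ M.support) :
    ((G \ M.spanningCoe).neighborSet v).encard + 1 ≤ (G.neighborSet v).encard := by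
  obtain ⟨w, hvw⟩ := hv
  have hw : w ∉ (G \ M.spanningCoe).neighborSet v := fun h ↦ h.2 hvw
  rw [← encard_insert_of_notMem hw]
  exact encard_le_encard (insert_subset hvw.adj_sub fun _ h ↦ h.1)

end Matching

section StarForest

variable {V W : Type*} {G : SimpleGraph V} {H : SimpleGraph W}

/-- A star forest: a graph each of whose components is a star. It is encoded by the equivalent local
condition that every edge has an end of degree one. -/
def IsStarForest (G : SimpleGraph V) : Prop :=
  ∀ ⦃u v⦄, G.Adj u v → (G.neighborSet u).Subsingleton ∨ (G.neighborSet v).Subsingleton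

namespace IsStarForest

lemma of_injective_hom (hH : IsStarForest H) (φ : G →g H) (hφ : Injective φ) :
    IsStarForest G := fun _ _ huv ↦
  (hH (φ.map_adj huv)).imp
    (fun h _ hx _ hy ↦ hφ (h (φ.map_adj hx) (φ.map_adj hy)))
    (fun h _ hx _ hy ↦ hφ (h (φ.map_adj hx) (φ.map_adj hy)))

lemma isAcyclic (hG : IsStarForest G) : G.IsAcyclic := by
  intro v p hp
  have hnot {w : V} (hw : w ∈ p.support) : ¬ (G.neighborSet w).Subsingleton := by
    have htwo : (p.toSubgraph.neighborSet w).Nontrivial :=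
      (one_lt_ncard_iff_nontrivial_and_finite.1 (hp.ncard_neighborSet_toSubgraph_eq_two hw).ge).1
    exact (htwo.mono (p.toSubgraph.neighborSet_subset w)).not_subsingleton
  rcases hG (p.adj_snd hp.not_nil) with h | h
  · exact hnot p.start_mem_support h
  · exact hnot (p.getVert_mem_support 1) h

lemma exists_mem_forall_adj_subsingleton (hG : IsStarForest G) (c : G.ConnectedComponent) :
    ∃ w ∈ c.supp, ∀ x, G.Adj w x → (G.neighborSet x).Subsingleton := by
  obtain ⟨v, rfl⟩ := c.exists_rep
  by_cases! hv : ∀ x, G.Adj v x → (G.neighborSet x).Subsingleton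
  · exact ⟨v, rfl, hv⟩
  · obtain ⟨w, hvw, hw⟩ := hv
    exact ⟨w, ConnectedComponent.sound hvw.symm.reachable,
      fun x hwx ↦ (hG hwx).resolve_left (not_subsingleton_iff.2 hw)⟩

lemma exists_supp_subset_insert_neighborSet (hG : IsStarForest G) (c : G.ConnectedComponent) :
    ∃ w, c.supp ⊆ insert w (G.neighborSet w) := by
  obtain ⟨w, hwc, hleaf⟩ := hG.exists_mem_forall_adj_subsingleton c
  refine ⟨w, fun v hv ↦ ?_⟩
  have hwv : Relation.ReflTransGen G.Adj w v :=
    (G.reachable_iff_reflTransGen w v).1 (ConnectedComponent.exact (hwc.trans hv.symm))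
  induction hwv with
  | refl => exact mem_insert w _
  | @tail x y hwx hxy ih =>
    rcases ih ((ConnectedComponent.sound
      ((G.reachable_iff_reflTransGen w x).2 hwx).symm).trans hwc) with rfl | hx
    · exact .inr hxy
    · exact .inl (hleaf x hx hxy hx.symm)

lemma encard_supp_le (hG : IsStarForest G) {n : ℕ∞} (hdeg : ∀ v, (G.neighborSet v).encard ≤ n)
    (c : G.ConnectedComponent) : c.supp.encard ≤ n + 1 := by
  obtain ⟨w, hw⟩ := hG.exists_supp_subset_insert_neighborSet c
  calc c.supp.encard ≤ (insert w (G.neighborSet w)).encard := encard_le_encard hw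
    _ ≤ (G.neighborSet w).encard + 1 := encard_insert_le _ _
    _ ≤ n + 1 := by gcongr; exact hdeg w

end IsStarForest

lemma encard_neighborSet_le_of_injective_hom (φ : G →g H) (hφ : Injective φ) (v : V) :
    (G.neighborSet v).encard ≤ (H.neighborSet (φ v)).encard :=
  encard_le_encard_of_injOn (fun _ hx ↦ φ.map_adj hx) hφ.injOn

end StarForest

section Bisection

variable {V : Type*} {G : SimpleGraph V}

lemma isStarForest_sdiff_of_maximal_isMatching (hdeg : ∀ v, (G.neighborSet v).encard ≤ 2)
    {N : G.Subgraph} (hN : Maximal Subgraph.IsMatching N) : IsStarForest (G \ N.spanningCoe) := by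
  have hleaf {v : V} (hv : v ∈ N.verts) : ((G \ N.spanningCoe).neighborSet v).Subsingleton := by
    rw [← encard_le_one_iff_subsingleton, ← ENat.add_le_add_iff_right ENat.one_ne_top,
      one_add_one_eq_two]
    exact (encard_neighborSet_sdiff_add_one_le (hN.prop.support_eq_verts ▸ hv)).trans (hdeg v)
  exact fun u v huv ↦ (mem_verts_or_mem_verts_of_maximal_isMatching hN huv.1).imp hleaf hleaf

lemma exists_injective_hom_induce_sdiff {K : SimpleGraph V} {S T : Set V}
    (hK : K.IsBipartiteWith S T) : ∃ φ : G.induce S →g G \ K, Injective φ :=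
  ⟨⟨Subtype.val, fun {u v} huv ↦
    ⟨huv, fun h ↦ hK.disjoint.notMem_of_mem_left v.2 (hK.mem_of_mem_adj u.2 h)⟩⟩,
    Subtype.val_injective⟩

lemma isAcyclic_induce_and_encard_supp_le {K : SimpleGraph V}
    (hdeg : ∀ v, ((G \ K).neighborSet v).encard ≤ 2) {N : (G \ K).Subgraph}
    (hN : Maximal Subgraph.IsMatching N) {S T : Set V}
    (hST : (K ⊔ N.spanningCoe).IsBipartiteWith S T) :
    (G.induce S).IsAcyclic ∧ ∀ c : (G.induce S).ConnectedComponent, c.supp.encard ≤ 3 := by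
  have hstar : IsStarForest (G \ (K ⊔ N.spanningCoe)) := by
    rw [← sdiff_sdiff_left]
    exact isStarForest_sdiff_of_maximal_isMatching hdeg hN
  have hle : G \ (K ⊔ N.spanningCoe) ≤ G \ K := sdiff_le_sdiff_left le_sup_left
  obtain ⟨φ, hφ⟩ := exists_injective_hom_induce_sdiff (G := G) hST
  have hind : IsStarForest (G.induce S) := hstar.of_injective_hom φ hφ
  have hdeg' (v : S) : ((G.induce S).neighborSet v).encard ≤ 2 :=
    (encard_neighborSet_le_of_injective_hom ((Hom.ofLE hle).comp φ) hφ v).trans (hdeg _)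
  exact ⟨hind.isAcyclic, fun c ↦ (hind.encard_supp_le hdeg' c).trans_eq two_add_one_eq_three⟩

lemma monoOK_of_encard_supp_le {m : ℕ} {S : Set V} (h : (G.induce S).IsAcyclic ∧
    ∀ c : (G.induce S).ConnectedComponent, c.supp.encard ≤ m) : MonoOK G m S :=
  ⟨h.1, fun c ↦ ENat.toNat_le_of_le_natCast (h.2 c)⟩

lemma encard_neighborSet_of_isCubic [Fintype V] (hG : IsCubic G) (v : V) :
    (G.neighborSet v).encard = 3 := by
  rw [← (toFinite (G.neighborSet v)).cast_ncard_eq, ← Nat.card_coe_set_eq, hG v, Nat.cast_ofNat]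

end Bisection

theorem stmt16_general {V : Type*} (G : SimpleGraph V) (hG : ∀ v, (G.neighborSet v).encard ≤ 3)
    (hM : ∃ M : G.Subgraph, M.IsPerfectMatching) :
    ∃ S : Set V, Nonempty (S ≃ ↥Sᶜ) ∧ ∀ T, T = S ∨ T = Sᶜ →
      (G.induce T).IsAcyclic ∧ ∀ c : (G.induce T).ConnectedComponent, c.supp.encard ≤ 3 := by
  obtain ⟨M, hM⟩ := hM
  obtain ⟨N, hN⟩ := exists_maximal_isMatching (G \ M.spanningCoe)
  obtain ⟨S, hS⟩ := exists_isBipartiteWith_compl_of_isMatching hM.1 hN.prop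
  have hdeg (v : V) : ((G \ M.spanningCoe).neighborSet v).encard ≤ 2 := by
    rw [← ENat.add_le_add_iff_right ENat.one_ne_top, two_add_one_eq_three]
    exact (encard_neighborSet_sdiff_add_one_le (hM.1.support_eq_verts ▸ hM.2 v)).trans (hG v)
  refine ⟨S, nonempty_equiv_of_isPerfectMatching hM
    ⟨hS.disjoint, fun _ _ h ↦ hS.mem_of_adj (.inl h)⟩, ?_⟩
  rintro T (rfl | rfl)
  · exact isAcyclic_induce_and_encard_supp_le hdeg hN hS
  · exact isAcyclic_induce_and_encard_supp_le hdeg hN hS.symm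

/-- Every cubic graph with a perfect matching admits a 5-weak bisection. -/
theorem stmt16 {V : Type*} [Fintype V] (G : SimpleGraph V) (hG : IsCubic G)
    (hM : ∃ M : G.Subgraph, M.IsPerfectMatching) :
    ∃ S : Set V, IsWeakBisection G 5 S := by
  obtain ⟨S, ⟨e⟩, hS⟩ := stmt16_general G (fun v ↦ (encard_neighborSet_of_isCubic hG v).le) hM
  exact ⟨S, Nat.card_congr e, monoOK_of_encard_supp_le (hS S (.inl rfl)),
    monoOK_of_encard_supp_le (hS Sᶜ (.inr rfl))⟩
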